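/- Let M be a connected noncompact manifold with exactly one end. Let E ⊂ M be a connected subset with E ≠ M, such that the topological boundary ∂E is compact and M ∖ E has noncompact closure. Then E has compact closure. -/

import Mathlib

/-- `M` has exactly one end: for every compact `K ⊆ M`, exactly one connected component of
`M \ K` has noncompact closure. -/
def HasOneEnd (M : Type*) [TopologicalSpace M] : Prop :=
  ∀ K : Set M, IsCompact K →
    ∃! C : Set M, (∃ x ∈ Kᶜ, C = connectedComponentIn Kᶜ x) ∧ ¬ IsCompact (closure C)

/-!
Let `K` be compact and nonempty, with compact neighbourhood `L`. The closure of every component of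
`M \ K` meets `K`, so a component that leaves `L` crosses `frontier L`. This compact set is covered
by the components, which are open and disjoint, so only finitely many of them leave `L`.
Consequently a set with noncompact closure meets a component with noncompact closure.
For `K = ∂E`, if `E` and `M \ E` both had noncompact closure, each would meet the single component
of `M \ ∂E` with noncompact closure; that component would then have to cross `∂E`.
-/

open Set

section

variable {X : Type*} [TopologicalSpace X] {K L U s C : Set X} {x : X}

theorem inter_frontier_nonempty_of_isPreconnected (hC : IsPreconnected C)
    (hCs : (C ∩ s).Nonempty) (hCs' : (C ∩ sᶜ).Nonempty) : (C ∩ frontier s).Nonempty := by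
  by_contra hempty
  have hcover : C ⊆ interior s ∪ interior sᶜ := by
    rw [← compl_frontier_eq_union_interior]
    exact fun y hyC hys => hempty ⟨y, hyC, hys⟩
  have hdisjoint : Disjoint (interior s) (interior sᶜ) :=
    disjoint_compl_right.mono interior_subset interior_subset
  rcases hC.subset_or_subset isOpen_interior isOpen_interior hdisjoint hcover with h | h
  · obtain ⟨y, hyC, hys⟩ := hCs'
    exact hys (interior_subset (h hyC))
  · obtain ⟨y, hyC, hys⟩ := hCs
    exact interior_subset (h hyC) hys

variable [PreconnectedSpace X] [LocallyConnectedSpace X]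

theorem closure_connectedComponentIn_inter_compl_nonempty (hU : IsOpen U) (hne : U ≠ univ)
    (hx : x ∈ U) : (closure (connectedComponentIn U x) ∩ Uᶜ).Nonempty := by
  by_contra hempty
  have hclosure : closure (connectedComponentIn U x) ⊆ U := fun y hy =>
    by_contra fun hyU => hempty ⟨y, hy, hyU⟩
  have hmem : x ∈ connectedComponentIn U x := mem_connectedComponentIn hx
  have hclosed : IsClosed (connectedComponentIn U x) := isClosed_of_closure_subset <|
    isPreconnected_connectedComponentIn.closure.subset_connectedComponentIn
      (subset_closure hmem) hclosure
  have huniv : connectedComponentIn U x = univ :=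
    IsClopen.eq_univ ⟨hclosed, hU.connectedComponentIn⟩ ⟨x, hmem⟩
  exact hne (univ_subset_iff.1 (huniv ▸ connectedComponentIn_subset U x))

theorem connectedComponentIn_compl_inter_frontier_nonempty (hK : IsClosed K) (hne : K.Nonempty)
    (hKL : K ⊆ interior L) (hx : x ∉ L) :
    (connectedComponentIn Kᶜ x ∩ frontier L).Nonempty := by
  have hxK : x ∈ Kᶜ := fun h => hx (interior_subset (hKL h))
  obtain ⟨y, hyC, hyK⟩ := closure_connectedComponentIn_inter_compl_nonempty hK.isOpen_compl
    (compl_ne_univ.2 hne) hxK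
  obtain ⟨z, hzL, hzC⟩ :=
    mem_closure_iff.1 hyC (interior L) isOpen_interior (hKL (not_notMem.1 hyK))
  exact inter_frontier_nonempty_of_isPreconnected isPreconnected_connectedComponentIn
    ⟨z, hzC, interior_subset hzL⟩ ⟨x, mem_connectedComponentIn hxK, hx⟩

theorem finite_image_connectedComponentIn_compl (hK : IsClosed K) (hne : K.Nonempty)
    (hKL : K ⊆ interior L) (hL : IsCompact (frontier L)) :
    (connectedComponentIn Kᶜ '' Lᶜ).Finite := by
  have hfrontier : frontier L ⊆ Kᶜ := fun y hy hyK => hy.2 (hKL hyK)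
  obtain ⟨t, -, hcover⟩ := hL.elim_nhds_subcover (connectedComponentIn Kᶜ) fun y hy =>
    connectedComponentIn_mem_nhds (hK.isOpen_compl.mem_nhds (hfrontier hy))
  refine (t.finite_toSet.image (connectedComponentIn Kᶜ)).subset ?_
  rintro _ ⟨x, hx, rfl⟩
  obtain ⟨y, hyx, hyL⟩ := connectedComponentIn_compl_inter_frontier_nonempty hK hne hKL hx
  obtain ⟨z, hzt, hyz⟩ := mem_iUnion₂.1 (hcover hyL)
  exact ⟨z, hzt, (connectedComponentIn_eq hyz).trans (connectedComponentIn_eq hyx).symm⟩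

variable [R1Space X] [WeaklyLocallyCompactSpace X]

theorem exists_not_isCompact_closure_connectedComponentIn_compl (hK : IsCompact K)
    (hclosed : IsClosed K) (hne : K.Nonempty) (hs : ¬ IsCompact (closure s)) :
    ∃ x ∈ s \ K, ¬ IsCompact (closure (connectedComponentIn Kᶜ x)) := by
  by_contra! hcomponents
  obtain ⟨L, hL, hKL⟩ := exists_compact_superset hK
  have hfrontier : IsCompact (frontier L) :=
    hL.closure.of_isClosed_subset isClosed_frontier frontier_subset_closure
  have hsL : s \ L ⊆ s \ K := sdiff_subset_sdiff_right (hKL.trans interior_subset)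
  have hfinite : (connectedComponentIn Kᶜ '' (s \ L)).Finite :=
    (finite_image_connectedComponentIn_compl hclosed hne hKL hfrontier).subset
      (image_mono fun _ h => h.2)
  have hcompact : IsCompact (⋃ C ∈ connectedComponentIn Kᶜ '' (s \ L), closure C) :=
    hfinite.isCompact_biUnion (forall_mem_image.2 fun x hx => hcomponents x (hsL hx))
  refine hs ((hL.union hcompact).closure_of_subset fun x hx => ?_)
  by_cases hxL : x ∈ L
  · exact Or.inl hxL
  · exact Or.inr <| mem_biUnion (mem_image_of_mem _ ⟨hx, hxL⟩) <|
      subset_closure (mem_connectedComponentIn (hsL ⟨hx, hxL⟩).2)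

theorem subset_with_compact_boundary_is_precompact_general (hend : HasOneEnd X)
    (hbd : IsCompact (frontier s)) (hcompl : ¬ IsCompact (closure sᶜ)) :
    IsCompact (closure s) := by
  by_contra hs
  have hne : (frontier s).Nonempty := by
    refine nonempty_frontier_iff.2 ⟨nonempty_iff_ne_empty.2 ?_, ?_⟩ <;> rintro rfl
    · simp at hs
    · simp at hcompl
  obtain ⟨x, ⟨hxs, hxbd⟩, hx⟩ :=
    exists_not_isCompact_closure_connectedComponentIn_compl hbd isClosed_frontier hne hs
  obtain ⟨y, ⟨hys, hybd⟩, hy⟩ :=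
    exists_not_isCompact_closure_connectedComponentIn_compl hbd isClosed_frontier hne hcompl
  have hxy : connectedComponentIn (frontier s)ᶜ x = connectedComponentIn (frontier s)ᶜ y :=
    (hend _ hbd).unique ⟨⟨x, hxbd, rfl⟩, hx⟩ ⟨⟨y, hybd, rfl⟩, hy⟩
  have hyx : y ∈ connectedComponentIn (frontier s)ᶜ x := hxy ▸ mem_connectedComponentIn hybd
  obtain ⟨z, hz, hzbd⟩ := inter_frontier_nonempty_of_isPreconnected
    isPreconnected_connectedComponentIn ⟨x, mem_connectedComponentIn hxbd, hxs⟩ ⟨y, hyx, hys⟩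
  exact connectedComponentIn_subset _ _ hz hzbd

end

/-- **Lemma 2.7.** Let `M` be a connected noncompact manifold with exactly one end, and
`E ⊆ M` a connected subset with `E ≠ M`, compact topological boundary `∂E`, and such that
`M \ E` has noncompact closure.  Then `E` has compact closure. -/
theorem subset_with_compact_boundary_is_precompact
    (n : ℕ) (M : Type*) [TopologicalSpace M] [T2Space M]
    [ChartedSpace (EuclideanSpace ℝ (Fin n)) M]
    [ConnectedSpace M] [NoncompactSpace M]
    (hend : HasOneEnd M)
    (E : Set M) (hEconn : IsConnected E) (hEne : E ≠ Set.univ)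
    (hbd : IsCompact (frontier E))
    (hcompl : ¬ IsCompact (closure Eᶜ)) :
    IsCompact (closure E) := by
  have := ChartedSpace.locallyCompactSpace (EuclideanSpace ℝ (Fin n)) M
  have := ChartedSpace.locallyConnectedSpace (EuclideanSpace ℝ (Fin n)) M
  exact subset_with_compact_boundary_is_precompact_general hend hbd hcompl
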